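/- arXiv:1711.04197 — 3 statements merged into one kernel-verified Lean document; each statement's English description precedes it below -/
import Mathlib

section
/- Let k be a field, B a left-noetherian k-algebra, N a finitely generated left B-module, and E a torsion left B-module (every cyclic submodule of E is finite-dimensional over k). Let N' be a cofinite submodule of N (i.e. N/N' is finite-dimensional over k) and let f : N' → E be a B-linear map. Then ker f, viewed as a submodule of N, is cofinite in N (i.e. N/ker f is finite-dimensional over k); in particular there exists a cofinite submodule N'' of N with N'' ⊆ N' on which f vanishes, so that the direct limit over cofinite submodules N' of the groups Hom_B(N', E) (with transition maps given by restriction) is zero. -/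
/-!
Since `B` is left noetherian and `N` is finitely generated, `N'` is finitely generated, hence so is
the image of `f`. A finitely generated submodule of a torsion module is a finite sum of
finite-dimensional cyclic submodules, so the image of `f` is finite-dimensional over `k`
(`finiteDimensional_of_fg_of_torsion`). Extending `f` to a `k`-linear map `g : N → im f`, the
submodule `ker f` is the kernel of the `k`-linear map `(g, π) : N → im f × N/N'`, whose target is
finite-dimensional; hence `N / ker f` is finite-dimensional.
-/

lemma finiteDimensional_of_fg_of_torsion
    {k B E : Type*} [Field k] [Ring B] [Algebra k B]
    [AddCommGroup E] [Module B E] [Module k E] [IsScalarTower k B E]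
    (htor : ∀ x : E, FiniteDimensional k (Submodule.span k (Set.range fun b : B => b • x)))
    (V : Submodule B E) (hV : V.FG) : FiniteDimensional k (V.restrictScalars k) := by
  induction V, hV using Submodule.fg_induction with
  | singleton x =>
    have h : (B ∙ x).restrictScalars k ≤ Submodule.span k (Set.range fun b : B => b • x) := by
      intro y hy
      obtain ⟨b, rfl⟩ := Submodule.mem_span_singleton.1 hy
      exact Submodule.subset_span ⟨b, rfl⟩
    have := htor x
    exact Submodule.finiteDimensional_of_le h
  | sup V W _ _ hV hW =>
    rw [Submodule.restrictScalars_sup]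
    infer_instance


/-- Let `k` be a field, `B` a left-noetherian `k`-algebra, `N` a finitely
generated left `B`-module, and `E` a torsion left `B`-module. Let `N'` be a cofinite
submodule of `N` and `f : N' → E` a `B`-linear map. Then `ker f`, viewed as a submodule of
`N`, is cofinite in `N`; in particular there exists a cofinite submodule `N'' ⊆ N'` of `N`
on which `f` vanishes (so that the direct limit over cofinite submodules of the groups
`Hom_B(N', E)` is zero). -/
theorem ker_cofinite_of_map_to_torsion
    (k B : Type*) [Field k] [Ring B] [Algebra k B] [IsNoetherianRing B]
    (N : Type*) [AddCommGroup N] [Module B N] [Module k N] [IsScalarTower k B N]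
    (hN : Module.Finite B N)
    (E : Type*) [AddCommGroup E] [Module B E] [Module k E] [IsScalarTower k B E]
    -- `E` is torsion:
    (htor : ∀ x : E, FiniteDimensional k (Submodule.span k (Set.range fun b : B => b • x)))
    (N' : Submodule B N)
    -- `N'` is cofinite in `N`:
    (hN' : FiniteDimensional k (N ⧸ N'.restrictScalars k))
    (f : N' →ₗ[B] E) :
    FiniteDimensional k (N ⧸ ((LinearMap.ker f).map N'.subtype).restrictScalars k) ∧
      ∃ N'' : Submodule B N, ∃ hle : N'' ≤ N',
        FiniteDimensional k (N ⧸ N''.restrictScalars k) ∧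
          ∀ x : N, ∀ hx : x ∈ N'', f ⟨x, hle hx⟩ = 0 := by
  have hK : FiniteDimensional k
      (N ⧸ ((LinearMap.ker f).map N'.subtype).restrictScalars k) := by
    have hNoeth : IsNoetherian B N := isNoetherian_of_isNoetherianRing_of_finite B N
    have hfg : (LinearMap.range f).FG := Module.Finite.iff_fg.1 inferInstance
    have hV := finiteDimensional_of_fg_of_torsion (k := k) htor _ hfg
    let f' : N'.restrictScalars k →ₗ[k] (LinearMap.range f).restrictScalars k :=
      f.rangeRestrict.restrictScalars k
    obtain ⟨g, hg⟩ := LinearMap.exists_extend f'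
    have hg' : ∀ x (hx : x ∈ N'), g x = f' ⟨x, hx⟩ := fun x hx =>
      LinearMap.congr_fun hg ⟨x, hx⟩
    let h := g.prod (N'.restrictScalars k).mkQ
    have hker : ((LinearMap.ker f).map N'.subtype).restrictScalars k = LinearMap.ker h := by
      ext x
      have hf' : ∀ hx : x ∈ N', f' ⟨x, hx⟩ = 0 ↔ f ⟨x, hx⟩ = 0 := fun hx => Subtype.ext_iff
      simp only [h, Submodule.restrictScalars_mem, Submodule.mem_map, LinearMap.mem_ker,
        LinearMap.prod_apply, Function.prod_apply, Prod.mk_eq_zero, Submodule.mkQ_apply,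
        Submodule.Quotient.mk_eq_zero]
      constructor
      · rintro ⟨⟨y, hy⟩, hfy, rfl⟩
        exact ⟨(hg' y hy).trans ((hf' hy).2 hfy), hy⟩
      · rintro ⟨hgx, hx⟩
        exact ⟨⟨x, hx⟩, (hf' hx).1 ((hg' x hx).symm.trans hgx), rfl⟩
    rw [hker]
    exact Module.Finite.equiv h.quotKerEquivRange.symm
  refine ⟨hK, (LinearMap.ker f).map N'.subtype, Submodule.map_subtype_le _ _, hK, ?_⟩
  rintro _ ⟨y, hy, rfl⟩
  exact hy
end

section
/- Let k be a field and Λ a left-noetherian k-algebra whose quotient Λ/J by its Jacobson radical J is finite-dimensional over k. Let M be a left Λ-module and x ∈ M. Then the cyclic submodule Λ•x is finite-dimensional over k if and only if there exists a natural number n with J^n • x = 0. Consequently, the torsion submodule Γ(M) = {x ∈ M : Λ•x is finite-dimensional over k} equals the union over all n of the annihilators of J^n in M. -/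
/-!
Both directions use the filtration `N ⊇ J N ⊇ J² N ⊇ ⋯` of `N = Λ x`, where `J` is the Jacobson
radical.

If `N` is finite-dimensional, Nakayama's lemma makes the filtration strictly decreasing until it
reaches `0`, so by induction on the dimension some `Jⁿ` annihilates `N`
(`exists_prod_smul_eq_zero`).

Conversely, if `Jⁿ N = 0`, induction on `n` shows that `J N` is finite-dimensional; it is again
finitely generated because `Λ` is noetherian. Choosing a finite-dimensional `k`-complement `V`
of `J` in `Λ` and generators `s` of `N`, one has `N = ∑ V y + J N` with `y` running over `s`,
so `N` is finite-dimensional (`finiteDimensional_of_prod_smul_eq_zero`).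

The condition `Jⁿ x = 0` is handled through products of lists of `n` elements of `J`
(`forall_mem_idealPow_smul_iff`).
-/

/-- The `n`-th power of a (two-sided) ideal `J` of a possibly noncommutative ring `Λ`:
the ideal generated by the products of `n` elements of `J`.  (For a two-sided ideal this
agrees with the usual power of ideals; in particular `idealPow J 0 = Λ`.) -/
def idealPow {Λ : Type*} [Ring Λ] (J : Ideal Λ) (n : ℕ) : Ideal Λ :=
  Ideal.span {x : Λ | ∃ l : List Λ, l.length = n ∧ (∀ a ∈ l, a ∈ J) ∧ x = l.prod}

section

variable {Λ M : Type*} [Ring Λ] [AddCommGroup M] [Module Λ M]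

lemma forall_mem_idealPow_smul_iff (J : Ideal Λ) (n : ℕ) (x : M) :
    (∀ a ∈ idealPow J n, a • x = 0) ↔
      ∀ l : List Λ, l.length = n → (∀ a ∈ l, a ∈ J) → l.prod • x = 0 := by
  constructor
  · intro h l hl hm
    exact h _ (Ideal.subset_span ⟨l, hl, hm, rfl⟩)
  · intro h a ha
    have hle : idealPow J n ≤ LinearMap.ker (LinearMap.toSpanSingleton Λ M x) := by
      refine Submodule.span_le.mpr ?_
      rintro _ ⟨l, hl, hm, rfl⟩
      simpa using h l hl hm
    simpa using hle ha

/-- Since `J` is also a right ideal, products of `n` elements of `J` that kill `x` kill all of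
`Λ • x`. -/
lemma prod_smul_eq_zero_of_mem_span (J : Ideal Λ) [J.IsTwoSided] (n : ℕ) (x : M)
    (h : ∀ l : List Λ, l.length = n → (∀ a ∈ l, a ∈ J) → l.prod • x = 0)
    (y : M) (hy : y ∈ Submodule.span Λ {x}) (l : List Λ) (hl : l.length = n)
    (hm : ∀ a ∈ l, a ∈ J) : l.prod • y = 0 := by
  obtain ⟨c, rfl⟩ := Submodule.mem_span_singleton.mp hy
  rcases List.eq_nil_or_concat l with rfl | ⟨l', a, rfl⟩
  · have hx : x = 0 := by simpa using h [] hl (by simp)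
    simp [hx]
  · -- The factor `c` is absorbed into the last element of the list.
    have := h (l' ++ [a * c]) (by simpa using hl) (by
      intro b hb
      rcases List.mem_append.mp hb with hb | hb
      · exact hm b (by simp [hb])
      · rw [List.mem_singleton.mp hb]
        exact J.mul_mem_right c (hm a (by simp)))
    simpa [mul_smul] using this

variable (k : Type*) [Field k] [Algebra k Λ] [Module k M] [IsScalarTower k Λ M]

/-- A finite-dimensional `N` is killed by a power of the Jacobson radical. The bound `d` on the
dimension is the induction variable. -/
lemma exists_prod_smul_eq_zero (d : ℕ) (N : Submodule Λ M) (hN : FiniteDimensional k N)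
    (hd : Module.finrank k N ≤ d) :
    ∃ n : ℕ, ∀ y ∈ N, ∀ l : List Λ, l.length = n → (∀ a ∈ l, a ∈ Ring.jacobson Λ) →
      l.prod • y = 0 := by
  induction d generalizing N with
  | zero =>
    have := Module.finrank_zero_iff.mp (Nat.le_zero.mp hd)
    refine ⟨0, fun y hy l _ _ => ?_⟩
    have : y = 0 := congrArg Subtype.val (Subsingleton.elim (⟨y, hy⟩ : N) 0)
    simp [this]
  | succ d ih =>
    by_cases hb : N = ⊥
    · refine ⟨0, fun y hy l _ _ => ?_⟩
      rw [hb, Submodule.mem_bot] at hy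
      simp [hy]
    have fg : N.FG := Module.Finite.iff_fg.mp (Module.Finite.of_restrictScalars_finite k Λ N)
    have hlt := Submodule.FG.jacobson_smul_lt hb fg
    have hN' : FiniteDimensional k (N.restrictScalars k) := hN
    have hlt' : (Ring.jacobson Λ • N).restrictScalars k < N.restrictScalars k := hlt
    have hfd : FiniteDimensional k ((Ring.jacobson Λ • N).restrictScalars k) :=
      Submodule.finiteDimensional_of_le hlt'.le
    have hrank := Submodule.finrank_lt_finrank_of_lt hlt'
    obtain ⟨n, hn⟩ := ih (Ring.jacobson Λ • N) hfd (Nat.le_of_lt_succ (hrank.trans_le hd))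
    refine ⟨n + 1, fun y hy l hl hm => ?_⟩
    rcases List.eq_nil_or_concat l with rfl | ⟨l', a, rfl⟩
    · simp at hl
    · have := hn (a • y) (Submodule.smul_mem_smul (hm a (by simp)) hy) l' (by simpa using hl)
        (fun b hb => hm b (by simp [hb]))
      simpa [mul_smul] using this

/-- If `J` has finite codimension in `Λ` and `N` is finitely generated, then `J N` has finite
codimension in `N`; hence `N` is finite-dimensional as soon as `J N` is. -/
lemma finiteDimensional_of_smul (J : Ideal Λ)
    (hJ : FiniteDimensional k (Λ ⧸ (J.restrictScalars k))) (N : Submodule Λ M) (fg : N.FG)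
    (h : FiniteDimensional k ((J • N).restrictScalars k)) :
    FiniteDimensional k (N.restrictScalars k) := by
  obtain ⟨V, hV⟩ := Submodule.exists_isCompl (J.restrictScalars k)
  have : FiniteDimensional k V :=
    Module.Finite.equiv (Submodule.quotientEquivOfIsCompl _ V hV)
  obtain ⟨s, rfl⟩ := fg
  let f : M → Submodule k M := fun y =>
    V.map ((LinearMap.toSpanSingleton Λ M y).restrictScalars k)
  have hf : FiniteDimensional k (s.sup f : Submodule k M) :=
    Submodule.finiteDimensional_finset_sup s f
  refine Submodule.finiteDimensional_of_le (S₂ := s.sup f ⊔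
    (J • Submodule.span Λ (s : Set M)).restrictScalars k) ?_
  intro z hz
  have hz' : z ∈ Submodule.span Λ (s : Set M) := hz
  rw [← Set.image_id (s : Set M), Submodule.mem_span_image_finset_iff_exists_fun] at hz'
  obtain ⟨c, rfl⟩ := hz'
  refine Submodule.sum_mem _ fun y _ => ?_
  have hc : c y ∈ J.restrictScalars k ⊔ V := by rw [hV.sup_eq_top]; trivial
  obtain ⟨a, ha, v, hv, hav⟩ := Submodule.mem_sup.mp hc
  rw [← hav, add_smul]
  refine add_mem (Submodule.mem_sup_right ?_) (Submodule.mem_sup_left ?_)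
  · rw [Submodule.restrictScalars_mem] at ha ⊢
    exact Submodule.smul_mem_smul ha (Submodule.subset_span y.2)
  · have hle : f y ≤ s.sup f := Finset.le_sup y.2
    exact hle (Submodule.mem_map.mpr ⟨v, hv, rfl⟩)

lemma finiteDimensional_of_prod_smul_eq_zero [IsNoetherianRing Λ]
    (J : Ideal Λ) (hJ : FiniteDimensional k (Λ ⧸ (J.restrictScalars k)))
    (n : ℕ) (N : Submodule Λ M) (fg : N.FG)
    (h : ∀ y ∈ N, ∀ l : List Λ, l.length = n → (∀ a ∈ l, a ∈ J) → l.prod • y = 0) :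
    FiniteDimensional k (N.restrictScalars k) := by
  induction n generalizing N with
  | zero =>
    have : N = ⊥ := (Submodule.eq_bot_iff N).mpr fun y hy => by simpa using h y hy [] rfl (by simp)
    subst this
    rw [Submodule.restrictScalars_bot]
    infer_instance
  | succ n ih =>
    have : IsNoetherian Λ N := isNoetherian_of_fg_of_noetherian N fg
    refine finiteDimensional_of_smul k J hJ N fg (ih (J • N) ?_ ?_)
    · exact (isNoetherian_submodule.mp this) _ Submodule.smul_le_right
    · intro y hy l hl hm
      refine Submodule.smul_induction_on hy (fun a ha z hz => ?_) (fun u v hu hv => ?_)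
      · have := h z hz (l ++ [a]) (by simp [hl]) (by
          intro b hb
          rcases List.mem_append.mp hb with hb | hb
          · exact hm b hb
          · rwa [List.mem_singleton.mp hb])
        simpa [mul_smul] using this
      · rw [smul_add, hu, hv, add_zero]

end

/-- Let `k` be a field and `Λ` a left-noetherian `k`-algebra whose quotient
`Λ/J` by its Jacobson radical `J` (the intersection of all maximal left ideals) is
finite-dimensional over `k`. Let `M` be a left `Λ`-module and `x ∈ M`. Then the cyclic
submodule `Λ•x` is finite-dimensional over `k` if and only if there exists `n : ℕ` with
`J^n • x = 0`. Consequently, the torsion submodule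
`Γ(M) = {x ∈ M : Λ•x is finite-dimensional over k}` equals the union over all `n` of the
annihilators of `J^n` in `M`. -/
theorem torsion_iff_jacobson_pow_annihilates
    (k Λ : Type*) [Field k] [Ring Λ] [Algebra k Λ] [IsNoetherianRing Λ]
    (hJ : FiniteDimensional k (Λ ⧸ ((⊥ : Ideal Λ).jacobson.restrictScalars k)))
    (M : Type*) [AddCommGroup M] [Module Λ M] [Module k M] [IsScalarTower k Λ M]
    (x : M) :
    (FiniteDimensional k ((Submodule.span Λ {x}).restrictScalars k) ↔
      ∃ n : ℕ, ∀ a ∈ idealPow ((⊥ : Ideal Λ).jacobson) n, a • x = 0) ∧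
    {y : M | FiniteDimensional k ((Submodule.span Λ {y}).restrictScalars k)} =
      ⋃ n : ℕ, {y : M | ∀ a ∈ idealPow ((⊥ : Ideal Λ).jacobson) n, a • y = 0} := by
  have key : ∀ y : M, FiniteDimensional k ((Submodule.span Λ {y}).restrictScalars k) ↔
      ∃ n : ℕ, ∀ a ∈ idealPow ((⊥ : Ideal Λ).jacobson) n, a • y = 0 := by
    intro y
    simp only [forall_mem_idealPow_smul_iff]
    rw [Ideal.jacobson_bot] at hJ ⊢
    constructor
    · intro h
      obtain ⟨n, hn⟩ := exists_prod_smul_eq_zero k _ (Submodule.span Λ {y}) h le_rfl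
      exact ⟨n, hn y (Submodule.mem_span_singleton_self y)⟩
    · rintro ⟨n, hn⟩
      exact finiteDimensional_of_prod_smul_eq_zero k _ hJ n _ (Submodule.fg_span_singleton y)
        (prod_smul_eq_zero_of_mem_span _ n y hn)
  refine ⟨key x, ?_⟩
  ext y
  simpa using key y
end

section
/- Let k be a field and Λ a left-noetherian k-algebra whose quotient Λ/J by its Jacobson radical J is finite-dimensional over k. Let N be a finitely generated left Λ-module and K a submodule of N such that N/K is finite-dimensional over k. Then there exists a natural number n such that J^n • N ⊆ K and N/(J^n • N) is finite-dimensional over k. -/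
theorem idealPow_eq_pow {Λ : Type*} [Ring Λ] (J : Ideal Λ) [J.IsTwoSided] (n : ℕ) :
    idealPow J n = J ^ n := by
  apply le_antisymm
  · refine Ideal.span_le.mpr ?_
    rintro _ ⟨l, rfl, hl, rfl⟩
    induction l with
    | nil =>
      rw [List.length_nil, Submodule.pow_zero, Ideal.one_eq_top]
      trivial
    | cons a l ih =>
      rw [List.prod_cons, List.length_cons, Ideal.IsTwoSided.pow_succ]
      exact Ideal.mul_mem_mul (hl a (by simp)) (ih fun b hb => hl b (by simp [hb]))
  · induction n with
    | zero =>
      have h : (1 : Λ) ∈ idealPow J 0 := Ideal.subset_span ⟨[], by simp⟩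
      rw [(Ideal.eq_top_iff_one _).mpr h]
      exact le_top
    | succ n ih =>
      rw [Submodule.pow_succ, Ideal.mul_le]
      intro r hr s hs
      replace hr := ih hr
      -- Right multiplication by `s ∈ J` sends generators of `idealPow J n` to those of
      -- `idealPow J (n + 1)`.
      suffices h : idealPow J n ≤
          Submodule.comap (LinearMap.toSpanSingleton Λ Λ s) (idealPow J (n + 1)) from h hr
      refine Ideal.span_le.mpr ?_
      rintro _ ⟨l, hl, hlJ, rfl⟩
      refine Ideal.subset_span ⟨l ++ [s], by simp [hl], ?_, by simp⟩
      intro a ha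
      rcases List.mem_append.mp ha with h | h
      · exact hlJ a h
      · rwa [List.mem_singleton.mp h]

theorem exists_pow_smul_top_eq_bot {Λ M : Type*} [Ring Λ] [AddCommGroup M] [Module Λ M]
    [IsNoetherian Λ M] [IsArtinian Λ M] :
    ∃ n : ℕ, Ring.jacobson Λ ^ n • (⊤ : Submodule Λ M) = ⊥ := by
  obtain ⟨n, hn⟩ := IsArtinian.monotone_stabilizes (R := Λ) (M := M)
    ⟨fun n => OrderDual.toDual (Ring.jacobson Λ ^ n • (⊤ : Submodule Λ M)),
      fun a b hab => Submodule.smul_mono_left (Ideal.pow_le_pow_right hab)⟩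
  refine ⟨n, Submodule.FG.eq_bot_of_le_jacobson_smul (IsNoetherian.noetherian _) ?_⟩
  rw [← Submodule.mul_smul, ← Ideal.IsTwoSided.pow_succ]
  exact (OrderDual.toDual_inj.mp (hn (n + 1) n.le_succ)).le

/-- A finitely generated module killed by `J` is a finitely generated module over the
finite-dimensional algebra `Λ ⧸ J`. -/
theorem finite_of_isTorsionBySet_jacobson (k : Type*) {Λ M : Type*} [Field k] [Ring Λ]
    [Algebra k Λ] [AddCommGroup M] [Module Λ M] [Module k M] [IsScalarTower k Λ M]
    [Module.Finite k (Λ ⧸ Ring.jacobson Λ)] [Module.Finite Λ M]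
    (h : Module.IsTorsionBySet Λ M (Ring.jacobson Λ)) : Module.Finite k M := by
  let _ := h.module
  have : Module.Finite (Λ ⧸ Ring.jacobson Λ) M :=
    (h.semilinearMap.finite_iff_of_bijective Function.bijective_id).mp inferInstance
  exact .trans (Λ ⧸ Ring.jacobson Λ) M

theorem finite_quotient_jacobson_smul (k : Type*) {Λ N : Type*} [Field k] [Ring Λ]
    [Algebra k Λ] [AddCommGroup N] [Module Λ N] [Module k N] [IsScalarTower k Λ N]
    [Module.Finite k (Λ ⧸ Ring.jacobson Λ)] [IsNoetherian Λ N]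
    (P : Submodule Λ N) [Module.Finite k (N ⧸ P)] :
    Module.Finite k (N ⧸ Ring.jacobson Λ • P) := by
  -- The image `P ⧸ J • P` of `P` is killed by `J`, and the quotient by it is `N ⧸ P`.
  let P' : Submodule Λ (N ⧸ Ring.jacobson Λ • P) := P.map (Ring.jacobson Λ • P).mkQ
  have h1 : Module.Finite k P' := by
    refine finite_of_isTorsionBySet_jacobson k (Λ := Λ) ?_
    rintro ⟨_, x, hx, rfl⟩ ⟨a, ha⟩
    apply Subtype.ext
    change a • (Ring.jacobson Λ • P).mkQ x = 0
    rw [← map_smul, Submodule.mkQ_apply, Submodule.Quotient.mk_eq_zero]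
    exact Submodule.smul_mem_smul ha hx
  have h2 : Module.Finite k ((N ⧸ Ring.jacobson Λ • P) ⧸ P') :=
    Module.Finite.equiv
      ((Submodule.quotientQuotientEquivQuotient _ P Submodule.smul_le_right).restrictScalars k).symm
  have h3 : Module.Finite k (P'.restrictScalars k) := h1
  have h4 : Module.Finite k ((N ⧸ Ring.jacobson Λ • P) ⧸ P'.restrictScalars k) := h2
  exact .of_submodule_quotient (P'.restrictScalars k)

theorem finite_quotient_pow_smul_top (k : Type*) {Λ N : Type*} [Field k] [Ring Λ]
    [Algebra k Λ] [AddCommGroup N] [Module Λ N] [Module k N] [IsScalarTower k Λ N]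
    [Module.Finite k (Λ ⧸ Ring.jacobson Λ)] [IsNoetherian Λ N] (n : ℕ) :
    Module.Finite k (N ⧸ Ring.jacobson Λ ^ n • (⊤ : Submodule Λ N)) := by
  induction n with
  | zero =>
    rw [Submodule.pow_zero, Submodule.one_smul]
    infer_instance
  | succ n ih =>
    rw [Ideal.IsTwoSided.pow_succ, Submodule.mul_smul]
    exact finite_quotient_jacobson_smul k _

/-- Let `k` be a field and `Λ` a left-noetherian `k`-algebra whose quotient
`Λ/J` by its Jacobson radical `J` (the intersection of all maximal left ideals) is
finite-dimensional over `k`. Let `N` be a finitely generated left `Λ`-module and `K` a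
submodule of `N` such that `N/K` is finite-dimensional over `k`. Then there exists `n : ℕ`
such that `J^n • N ⊆ K` and `N/(J^n • N)` is finite-dimensional over `k`.
(Here `J^n • N` is the submodule generated by the products `a • x`, `a ∈ J^n`, `x ∈ N`.) -/
theorem jacobson_pow_smul_le_cofinite_submodule
    (k Λ : Type*) [Field k] [Ring Λ] [Algebra k Λ] [IsNoetherianRing Λ]
    (hJ : FiniteDimensional k (Λ ⧸ ((⊥ : Ideal Λ).jacobson.restrictScalars k)))
    (N : Type*) [AddCommGroup N] [Module Λ N] [Module k N] [IsScalarTower k Λ N]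
    (hN : Module.Finite Λ N)
    (K : Submodule Λ N)
    (hK : FiniteDimensional k (N ⧸ K.restrictScalars k)) :
    ∃ n : ℕ,
      Submodule.span Λ {y : N |
          ∃ a ∈ idealPow ((⊥ : Ideal Λ).jacobson) n, ∃ x : N, y = a • x} ≤ K ∧
      FiniteDimensional k (N ⧸ (Submodule.span Λ {y : N |
          ∃ a ∈ idealPow ((⊥ : Ideal Λ).jacobson) n, ∃ x : N, y = a • x}).restrictScalars k) := by
  have hbot : (⊥ : Ideal Λ).jacobson = Ring.jacobson Λ := Ideal.jacobson_bot
  rw [hbot] at hJ ⊢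
  have hJ' : Module.Finite k (Λ ⧸ Ring.jacobson Λ) := hJ
  have hK' : Module.Finite k (N ⧸ K) := hK
  have hspan (n : ℕ) : Submodule.span Λ {y : N |
      ∃ a ∈ idealPow (Ring.jacobson Λ) n, ∃ x : N, y = a • x} =
        Ring.jacobson Λ ^ n • (⊤ : Submodule Λ N) := by
    rw [idealPow_eq_pow]
    apply le_antisymm
    · refine Submodule.span_le.mpr ?_
      rintro _ ⟨a, ha, x, rfl⟩
      exact Submodule.smul_mem_smul ha trivial
    · exact Submodule.smul_le.mpr fun a ha x _ => Submodule.subset_span ⟨a, ha, x, rfl⟩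
  have : IsArtinian Λ (N ⧸ K) := isArtinian_of_tower k inferInstance
  obtain ⟨n, hn⟩ := exists_pow_smul_top_eq_bot (Λ := Λ) (M := N ⧸ K)
  refine ⟨n, ?_, ?_⟩
  · rw [hspan, Submodule.smul_le]
    intro a ha x _
    have h : a • K.mkQ x ∈ Ring.jacobson Λ ^ n • (⊤ : Submodule Λ (N ⧸ K)) :=
      Submodule.smul_mem_smul ha trivial
    rwa [hn, Submodule.mem_bot, ← map_smul, Submodule.mkQ_apply,
      Submodule.Quotient.mk_eq_zero] at h
  · rw [hspan]
    exact finite_quotient_pow_smul_top k n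
end
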